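/- Let a, b, c, α and n be positive integers with C(α+n, n) + a = b + c and a < C(α+n, n), b < C(α+n, n), c < C(α+n, n). If moreover C(α+n, n)^{<n>} + a^{<n>} = b^{<n>} + c^{<n>}, then (C(α+n, n)^{<n>})^{<n>} + (a^{<n>})^{<n>} = (b^{<n>})^{<n>} + (c^{<n>})^{<n>}. -/

import Mathlib

/-!
List the monomials of degree `n` in `x_0, x_1, …` colexicographically (the exponents of the last
variable in which two monomials differ decide, the smaller one first), and let `e_k` be the
exponent of `x_0` in the `k`-th one, starting from `k = 0`. Then
`macUp n h = ∑_{k < h} (e_k + 1)`, `macUp n (macUp n h) = ∑_{k < h} C(e_k + 2, 2)`.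
For any weight that is nondecreasing in `e_k`, the last `L` monomials of degree `n` in
`x_0, …, x_α` have the least total weight among all `L` consecutive ones. Hence the sum `E` of
weights over initial segments satisfies `E N + E a ≤ E b + E c` whenever `N = C(α + n, n)`,
`N + a = b + c` and `b, c ≤ N` (`weight_le`). On the range `e ≤ n` both `C(e + 2, 2)` and
`(n + 1) (e + 1) - C(e + 2, 2)` are nondecreasing; since the sums of `e + 1` balance exactly by
hypothesis, the two resulting inequalities give the equality for `C(e + 2, 2)`.

The extremal property is proved by induction on `α` (`SuffixExtremal.glue`): grouping by the
exponent of the last variable, the monomials in `x_0, …, x_{α+1}` of degree `n` are the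
concatenation of those in `x_0, …, x_α` of degrees `n, n - 1, …, 0`. The induction carries along the companion fact that
initial segments have the largest weight. The code never mentions monomials: it works with the
partial sums `E`, characterised by the recursion that this concatenation gives (`IsWeightSum`).
-/

open Finset

/-- `macUp n h` is `h^{<n>}`, computed via the greedy (Macaulay) binomial
representation `h = C(a_n, n) + C(a_{n-1}, n-1) + ⋯` (equivalently
`h = C(h(n)+n, n) + ⋯ + C(h(i)+i, i)` with `h(n) ≥ ⋯ ≥ h(i) ≥ 0`), giving
`h^{<n>} = C(a_n+1, n) + C(a_{n-1}+1, n-1) + ⋯`; `macUp n 0 = 0`, `macUp 0 1 = 1`. -/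
def macUp : ℕ → ℕ → ℕ
  | 0, h => h
  | n+1, h =>
    if h = 0 then 0
    else
      let a := Nat.findGreatest (fun a => Nat.choose a (n+1) ≤ h) (h + n + 1)
      Nat.choose (a+1) (n+1) + macUp n (h - Nat.choose a (n+1))

/-! ### Suffix sums of concatenated blocks -/

/-- `s l` stands for the weight of the last `l` entries of a word whose suffixes of lengths
`N 0 ≤ N 1 ≤ ⋯ ≤ N M` are distinguished. Field `sup` says that the last `l` entries of the word of
length `N M` have the least weight among `l` consecutive ones; field `sub` says that the first
entries of each word of length `N k` have the greatest weight among the same number of consecutive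
ones. -/
structure SuffixExtremal (M : ℕ) (N : ℕ → ℕ) (s : ℕ → ℤ) : Prop where
  zero : s 0 = 0
  sup : ∀ x y, x + y ≤ N M → s x + s y ≤ s (x + y)
  sub : ∀ k A B x, k ≤ M → A ≤ N k → B ≤ N k → A + B = N k + x → s A + s B ≤ s (N k) + s x

/-- Locates a position in the block decomposition with block lengths `N` and block ends `T`. -/
lemma exists_block {N T : ℕ → ℕ} (hN : ∀ p, 0 < N p) (hT0 : T 0 = 0)
    (hT : ∀ p, T (p + 1) = T p + N p) (x : ℕ) : ∃ m v, x = T m + v ∧ v < N m := by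
  induction x with
  | zero => exact ⟨0, 0, by simp [hT0], hN 0⟩
  | succ x ih =>
    obtain ⟨m, v, h, hv⟩ := ih
    by_cases h' : v + 1 < N m
    · exact ⟨m, v + 1, by omega, h'⟩
    · exact ⟨m + 1, 0, by rw [hT]; omega, hN _⟩

section Glue

variable {M : ℕ} {N T : ℕ → ℕ} {s s' : ℕ → ℤ}

/-- With `s' x` the weight of the last `x` entries of the concatenation of blocks of lengths
`…, N 1, N 0` (hypothesis `hg`): the `y` entries that end just before the last `p` blocks weigh at
most as much as a suffix of length `y` of a single block. -/
lemma glue_le (hs : SuffixExtremal M N s) (hN : ∀ p, 0 < N p) (hT : ∀ p, T (p + 1) = T p + N p)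
    (hTm : Monotone T) (hg : ∀ p l, p ≤ M → l ≤ N p → s' (T p + l) = s' (T p) + s l) :
    ∀ y p, T p + y ≤ T (M + 1) → y ≤ N M → s' (T p + y) ≤ s' (T p) + s y := by
  intro y
  induction y using Nat.strong_induction_on with
  | _ y ih =>
    intro p h1 h2
    rcases Nat.eq_zero_or_pos y with rfl | hy
    · simp [hs.zero]
    have hp : p ≤ M := by
      by_contra hc
      have := hTm (show M + 1 ≤ p by omega)
      omega
    by_cases h3 : y ≤ N p
    · exact (hg p y hp h3).le
    obtain ⟨z, rfl⟩ := Nat.exists_eq_add_of_le (le_of_not_ge h3)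
    have e := hg p (N p) hp le_rfl
    have e1 := ih z (by have := hN p; omega) (p + 1) (by rw [hT]; omega) (by omega)
    have e2 := hs.sup _ _ h2
    rw [hT, add_assoc] at e1
    linarith

/-- Any `y ≤ N p` consecutive entries that lie before the last `p` blocks weigh at least as much
as a suffix of length `y` of a single block. -/
lemma le_glue (hs : SuffixExtremal M N s) (hN : ∀ p, 0 < N p) (hNm : Monotone N) (hT0 : T 0 = 0)
    (hT : ∀ p, T (p + 1) = T p + N p) (hTm : Monotone T)
    (hg : ∀ p l, p ≤ M → l ≤ N p → s' (T p + l) = s' (T p) + s l)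
    (p x y : ℕ) (hy : y ≤ N p) (hx : T p ≤ x) (hxy : x + y ≤ T (M + 1)) :
    s' x + s y ≤ s' (x + y) := by
  rcases Nat.eq_zero_or_pos y with rfl | hy0
  · simp [hs.zero]
  obtain ⟨m, v, rfl, hv⟩ := exists_block hN hT0 hT x
  have hm : m ≤ M := by
    by_contra hc
    have := hTm (show M + 1 ≤ m by omega)
    omega
  have hpm : p ≤ m := by
    by_contra hc
    have := hTm (show m + 1 ≤ p by omega)
    rw [hT] at this
    omega
  have hNpm := hNm hpm
  have hNmM := hNm hm
  rw [hg m v hm hv.le, add_assoc, add_assoc (T m)]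
  by_cases hvy : v + y ≤ N m
  · rw [hg m _ hm hvy]
    have := hs.sup v y (by omega)
    linarith
  -- the `y` entries straddle the boundary between the blocks `m` and `m + 1`
  obtain ⟨u, hu⟩ := Nat.exists_eq_add_of_le (le_of_not_ge hvy)
  have hm1 : m + 1 ≤ M := by
    by_contra hc
    obtain rfl : m = M := by omega
    have := hT m
    omega
  have e : T m + (v + y) = T (m + 1) + u := by rw [hT]; omega
  have hNm1 := hNm (Nat.le_succ m)
  have e1 := hg (m + 1) u hm1 (by simp only [Nat.succ_eq_add_one] at hNm1; omega)
  have e2 := hg m (N m) hm le_rfl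
  rw [← hT] at e2
  have e3 := hs.sub m v y u hm hv.le (by omega) (by omega)
  rw [e, e1, e2]
  linarith

/-- Within the last `r + 1` blocks, any `t ≤ N r` consecutive entries weigh at most as much as the
first `t` entries of block `r`. -/
lemma glue_le_prefix (hs : SuffixExtremal M N s) (hN : ∀ p, 0 < N p) (hNm : Monotone N) (hT0 : T 0 = 0)
    (hT : ∀ p, T (p + 1) = T p + N p) (hTm : Monotone T)
    (hg : ∀ p l, p ≤ M → l ≤ N p → s' (T p + l) = s' (T p) + s l)
    (r x t : ℕ) (hr : r ≤ M) (ht : t ≤ N r) (hxt : x + t ≤ T (r + 1)) :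
    s' (x + t) + s (N r - t) ≤ s' x + s (N r) := by
  rcases Nat.eq_zero_or_pos t with rfl | ht0
  · simp
  obtain ⟨q, v, rfl, hv⟩ := exists_block hN hT0 hT x
  have hqr : q ≤ r := by
    by_contra hc
    have := hTm (show r + 1 ≤ q by omega)
    omega
  have hNqr := hNm hqr
  have hNrM := hNm hr
  have hTr := hTm (show r + 1 ≤ M + 1 by omega)
  have e0 := hg q v (by omega) hv.le
  by_cases hvt : v + t ≤ N q
  · rw [add_assoc, hg q _ (by omega) hvt, e0]
    have := hs.sub r (v + t) (N r - t) v hr (by omega) (by omega) (by omega)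
    linarith
  -- `t₁` entries lie in block `q`, the other `t₂` in the blocks before it
  obtain ⟨t₁, ht₁⟩ := Nat.exists_eq_add_of_le hv.le
  obtain ⟨t₂, rfl⟩ := Nat.exists_eq_add_of_le (show t₁ ≤ t by omega)
  have e : T q + v + (t₁ + t₂) = T (q + 1) + t₂ := by rw [hT]; omega
  have e1 := glue_le hs hN hT hTm hg t₂ (q + 1) (by omega) (by omega)
  have e2 := hg q (N q) (by omega) le_rfl
  rw [← hT] at e2
  have e3 := hs.sub r (N q) (N r - t₁) v hr (by omega) (by omega) (by omega)
  have e4 := hs.sup (N r - (t₁ + t₂)) t₂ (by omega)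
  rw [show N r - (t₁ + t₂) + t₂ = N r - t₁ by omega] at e4
  rw [e, e0]
  linarith

/-- Concatenating blocks with extremal suffixes of lengths `…, N 1, N 0` gives another such word;
`T p` is the total length of the last `p` blocks. -/
lemma SuffixExtremal.glue (hs : SuffixExtremal M N s) (hN : ∀ p, 0 < N p) (hNm : Monotone N) (hT0 : T 0 = 0)
    (hT : ∀ p, T (p + 1) = T p + N p) (h0 : s' 0 = 0)
    (hg : ∀ p l, p ≤ M → l ≤ N p → s' (T p + l) = s' (T p) + s l) :
    SuffixExtremal M (fun k => T (k + 1)) s' := by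
  have hTm : Monotone T := monotone_nat_of_le_succ fun p => by rw [hT]; omega
  refine ⟨h0, ?_, ?_⟩
  · intro x
    induction x using Nat.strong_induction_on with
    | _ x ih =>
      intro y hxy
      rcases Nat.eq_zero_or_pos x with rfl | hx
      · simp [h0]
      -- write `x = T p + i` with `0 < i ≤ N p`, by locating `x - 1` instead of `x`
      obtain ⟨p, v, h, hv⟩ := exists_block hN hT0 hT (x - 1)
      obtain ⟨i, rfl⟩ : ∃ i, i = v + 1 := ⟨_, rfl⟩
      obtain rfl : x = T p + (v + 1) := by omega
      have hp : p ≤ M := by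
        by_contra hc
        have := hTm (show M + 1 ≤ p by omega)
        omega
      have hNpM := hNm hp
      by_cases hy : v + 1 ≤ y
      · -- compare with the interval shifted to the right up to the next block boundary
        have e1 := le_glue hs hN hNm hT0 hT hTm hg p (T p + y) (v + 1) hv (by omega) (by omega)
        have e2 := ih (T p) (by omega) y (by omega)
        have e3 := hg p (v + 1) hp hv
        rw [show T p + y + (v + 1) = T p + (v + 1) + y by omega] at e1
        linarith
      · have e1 := le_glue hs hN hNm hT0 hT hTm hg p (T p + (v + 1)) y (by omega) (by omega) hxy
        have e2 := glue_le hs hN hT hTm hg y 0 (by omega) (by omega)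
        simp only [hT0, zero_add, h0] at e2
        linarith
  · intro k A B x hk hA hB
    -- move the left end `A` of the interval `[x, A)` to the left, one block boundary at a time
    induction hd : T (k + 1) - A using Nat.strong_induction_on generalizing A x with
    | _ d ih =>
      intro h
      rcases Nat.eq_or_lt_of_le hA with rfl | hA'
      · obtain rfl : B = x := by omega
        linarith
      obtain ⟨r, u, rfl, hu⟩ := exists_block hN hT0 hT A
      have hr : r ≤ k := by
        by_contra hc
        have := hTm (show k + 1 ≤ r by omega)
        omega
      obtain ⟨t, ht⟩ := Nat.exists_eq_add_of_le hu.le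
      have hTr := hTm (show r + 1 ≤ k + 1 by omega)
      have hTr' := hT r
      have e1 := ih (T (k + 1) - T (r + 1)) (by omega) (T (r + 1)) (x + t) (by omega) rfl (by omega)
      have e2 := glue_le_prefix hs hN hNm hT0 hT hTm hg r x t (by omega) (by omega) (by omega)
      have e3 := hg r u (by omega) hu.le
      have e4 := hg r (N r) (by omega) le_rfl
      rw [← hT] at e4
      rw [show N r - t = u by omega] at e2
      linarith

end Glue

/-! ### Weight sums over initial segments of monomials -/

/-- `E n h` is the total weight of the first `h` monomials of degree `n`. The field `step` expresses
that in degree `n + 1` the monomials in `x_0, …, x_m`, which number `C(m + n + 1, m)`, are followed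
by the multiples of `x_{m+1}`, listed and weighted like the monomials of degree `n` in
`x_0, …, x_{m+1}`. -/
structure IsWeightSum (E : ℕ → ℕ → ℤ) : Prop where
  zero : ∀ n, E n 0 = 0
  step : ∀ m n r, r ≤ (m + 1 + n).choose (m + 1) →
    E (n + 1) ((m + (n + 1)).choose m + r) = E (n + 1) ((m + (n + 1)).choose m) + E n r

/-- The total weight of the last `l` monomials of degree `n` in `x_0, …, x_α`. -/
def suffixWeight (E : ℕ → ℕ → ℤ) (n α l : ℕ) : ℤ :=
  E n ((α + n).choose α) - E n ((α + n).choose α - l)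

lemma choose_split (m n : ℕ) : (m + 1 + (n + 1)).choose (m + 1) =
    (m + (n + 1)).choose m + (m + 1 + n).choose (m + 1) := by
  rw [show m + 1 + (n + 1) = (m + (n + 1)) + 1 by ring, Nat.choose_succ_succ,
    show m + 1 + n = m + (n + 1) by ring]

lemma choose_deg_mono (α : ℕ) : Monotone fun k => (α + k).choose α :=
  fun _ _ h => Nat.choose_le_choose _ (by omega)

/-- The last `l` monomials have a weight that does not depend on the degree, once the degree is
large enough for there to be `l` of them. -/
lemma suffixWeight_eq {E : ℕ → ℕ → ℤ} (hE : IsWeightSum E) {n M : ℕ} (hnM : n ≤ M) (m l : ℕ)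
    (hl : l ≤ (m + 1 + n).choose (m + 1)) :
    suffixWeight E M (m + 1) l = suffixWeight E n (m + 1) l := by
  induction M, hnM using Nat.le_induction with
  | base => rfl
  | succ k hk ih =>
    rw [← ih]
    have hl' : l ≤ (m + 1 + k).choose (m + 1) := hl.trans (choose_deg_mono (m + 1) hk)
    unfold suffixWeight
    rw [choose_split, hE.step _ _ _ le_rfl, Nat.add_sub_assoc hl', hE.step _ _ _ (Nat.sub_le _ _)]
    ring

/-- With two variables the weights are listed in nonincreasing order, so suffix sums are convex. -/
lemma suffixExtremal_one {E : ℕ → ℕ → ℤ} (hE : IsWeightSum E) (M : ℕ)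
    (hmono : ∀ l l', l ≤ l' → l' ≤ M → E l 1 ≤ E l' 1) :
    SuffixExtremal M (fun k => (1 + k).choose 1) (suffixWeight E M 1) := by
  have hinc : ∀ l, l ≤ M → suffixWeight E M 1 (l + 1) = suffixWeight E M 1 l + E l 1 := by
    intro l hl
    rw [suffixWeight_eq hE hl 0 (l + 1) (by simp), suffixWeight_eq hE hl 0 l (by simp)]
    simp only [suffixWeight, zero_add, Nat.choose_one_right]
    rw [show 1 + l - (l + 1) = 0 by omega, show 1 + l - l = 1 by omega, hE.zero]
    ring
  have h0 : suffixWeight E M 1 0 = 0 := by simp [suffixWeight]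
  have key : ∀ x w u, x + u + w ≤ M + 1 → suffixWeight E M 1 (x + u) + suffixWeight E M 1 (x + w)
      ≤ suffixWeight E M 1 (x + u + w) + suffixWeight E M 1 x := by
    intro x w u
    induction u with
    | zero => intro _; simp only [add_zero]; linarith
    | succ u ih =>
      intro h
      have e1 := hinc (x + u) (by omega)
      have e2 := hinc (x + u + w) (by omega)
      have e3 := hmono (x + u) (x + u + w) (by omega) (by omega)
      have e4 := ih (by omega)
      rw [show x + (u + 1) + w = x + u + w + 1 by ring, ← add_assoc]
      linarith
  refine ⟨h0, ?_, ?_⟩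
  · intro x y h
    simp only [Nat.choose_one_right] at h
    have := key 0 y x (by omega)
    simp only [zero_add, h0] at this
    linarith
  · intro k A B x hk hA hB h
    simp only [Nat.choose_one_right] at hA hB h ⊢
    have := key x (B - x) (A - x) (by omega)
    rw [show x + (A - x) + (B - x) = 1 + k by omega, show x + (A - x) = A by omega,
      show x + (B - x) = B by omega] at this
    exact this

lemma suffixExtremal {E : ℕ → ℕ → ℤ} (hE : IsWeightSum E) (M : ℕ)
    (hmono : ∀ l l', l ≤ l' → l' ≤ M → E l 1 ≤ E l' 1) (m : ℕ) :
    SuffixExtremal M (fun k => (m + 1 + k).choose (m + 1)) (suffixWeight E M (m + 1)) := by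
  induction m with
  | zero => simpa using suffixExtremal_one hE M hmono
  | succ m ih =>
    have h := SuffixExtremal.glue (T := fun p => (m + 1 + p).choose (m + 1 + 1))
      (s' := suffixWeight E M (m + 1 + 1)) ih (fun p => Nat.choose_pos (by omega))
      (choose_deg_mono (m + 1)) (by simp)
      (fun p => by
        rw [← add_assoc, Nat.choose_succ_succ, add_comm])
      (by simp [suffixWeight]) ?_
    · convert h using 3
      ring
    · intro p l hp hl
      -- in degree `p`, the monomials involving `x_{m+2}` are exactly the last `T p` ones
      have e : (m + 1 + 1 + p).choose (m + 1 + 1)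
          = (m + 1 + p).choose (m + 1) + (m + 1 + p).choose (m + 1 + 1) := by
        rw [show m + 1 + 1 + p = m + 1 + p + 1 by ring, Nat.choose_succ_succ]
      rw [suffixWeight_eq hE hp (m + 1) _ (by omega), suffixWeight_eq hE hp (m + 1) _ (by omega),
        suffixWeight_eq hE hp m _ hl]
      simp only [suffixWeight]
      rw [e]
      generalize (m + 1 + p).choose (m + 1 + 1) = t at *
      generalize (m + 1 + p).choose (m + 1) = u at *
      rw [show u + t - (t + l) = u - l by omega, show u + t - t = u by omega]
      ring

/-- The inequality for all weights that are nondecreasing in the exponent of `x_0`; `E l 1` is the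
weight of `x_0 ^ l`. -/
lemma weight_le {E : ℕ → ℕ → ℤ} (hE : IsWeightSum E) {n α a b c : ℕ} (hα : 0 < α)
    (hmono : ∀ l l', l ≤ l' → l' ≤ n → E l 1 ≤ E l' 1)
    (heq : (α + n).choose n + a = b + c)
    (hb : b ≤ (α + n).choose n) (hc : c ≤ (α + n).choose n) :
    E n ((α + n).choose n) + E n a ≤ E n b + E n c := by
  obtain ⟨m, rfl⟩ : ∃ m, α = m + 1 := ⟨α - 1, by omega⟩
  rw [← Nat.choose_symm_add] at *
  have h := (suffixExtremal hE n hmono m).sup ((m + 1 + n).choose (m + 1) - c)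
    ((m + 1 + n).choose (m + 1) - b) (by omega)
  simp only [suffixWeight] at h
  generalize (m + 1 + n).choose (m + 1) = N at *
  rw [show N - (N - c) = c by omega, show N - (N - b) = b by omega,
    show N - (N - c + (N - b)) = a by omega] at h
  linarith

/-! ### Iterates of `macUp` as weight sums -/

lemma macUp_zero_right (n : ℕ) : macUp n 0 = 0 := by
  cases n <;> simp [macUp]

lemma lt_choose_add (n k : ℕ) : k < (n + 1 + k).choose (n + 1) := by
  induction k with
  | zero => simp
  | succ k ih =>
    rw [choose_split]
    have := Nat.choose_pos (show n ≤ n + (k + 1) by omega)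
    omega

lemma macUp_succ {n a h : ℕ} (ha : n + 1 ≤ a) (h1 : a.choose (n + 1) ≤ h)
    (h2 : h < (a + 1).choose (n + 1)) :
    macUp (n + 1) h = (a + 1).choose (n + 1) + macUp n (h - a.choose (n + 1)) := by
  have hpos := Nat.choose_pos ha
  have hle : a ≤ h + n + 1 := by
    have := lt_choose_add n (a - (n + 1))
    rw [show n + 1 + (a - (n + 1)) = a by omega] at this
    omega
  have hfg : Nat.findGreatest (fun a => Nat.choose a (n + 1) ≤ h) (h + n + 1) = a := by
    rw [Nat.findGreatest_eq_iff]
    refine ⟨hle, fun _ => h1, fun b hab _ hb => ?_⟩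
    have := Nat.choose_le_choose (n + 1) (show a + 1 ≤ b by omega)
    omega
  rw [macUp, if_neg (by omega)]
  simp only [hfg]

lemma exists_greedy {n r : ℕ} (hr : 0 < r) (b : ℕ) (h : r < b.choose (n + 1)) :
    ∃ a, n + 1 ≤ a ∧ a < b ∧ a.choose (n + 1) ≤ r ∧ r < (a + 1).choose (n + 1) := by
  induction b with
  | zero => simp at h
  | succ b ih =>
    by_cases h' : r < b.choose (n + 1)
    · obtain ⟨a, h1, h2, h3⟩ := ih h'
      exact ⟨a, h1, by omega, h3⟩
    · refine ⟨b, ?_, by omega, by omega, h⟩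
      by_contra hc
      have := Nat.choose_le_choose (n + 1) (show b + 1 ≤ n + 1 by omega)
      rw [Nat.choose_self] at this
      omega

/-- `macUp` maps remainders admissible below `a` to remainders admissible below `a + 1`, so it
shifts each term of the greedy representation. -/
lemma macUp_lt (n : ℕ) : ∀ a r, r < a.choose n → macUp n r < (a + 1).choose n := by
  induction n with
  | zero => intro a r h; simpa [macUp] using h
  | succ n ih =>
    intro b r h
    rcases Nat.eq_zero_or_pos r with rfl | hr
    · rw [macUp_zero_right]
      exact h.trans_le (Nat.choose_le_choose _ (by omega))
    obtain ⟨a, h1, h2, h3, h4⟩ := exists_greedy hr b h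
    rw [macUp_succ h1 h3 h4]
    have e := Nat.choose_succ_succ a n
    have e' := Nat.choose_succ_succ (a + 1) n
    have := ih a (r - a.choose (n + 1)) (by simp only [Nat.succ_eq_add_one] at e; omega)
    have := Nat.choose_le_choose (n + 1) (show a + 1 + 1 ≤ b + 1 by omega)
    simp only [Nat.succ_eq_add_one] at e'
    omega

lemma iter_zero (n j : ℕ) : (macUp n)^[j] 0 = 0 :=
  Function.iterate_fixed (macUp_zero_right n) j

lemma iter_succ {n : ℕ} (j : ℕ) : ∀ {a r : ℕ}, n + 1 ≤ a → r < a.choose n →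
    (macUp (n + 1))^[j] (a.choose (n + 1) + r)
      = (a + j).choose (n + 1) + (macUp n)^[j] r := by
  induction j with
  | zero => intro a r _ _; simp
  | succ j ih =>
    intro a r ha hr
    have e := Nat.choose_succ_succ a n
    simp only [Nat.succ_eq_add_one] at e
    rw [Function.iterate_succ_apply, Function.iterate_succ_apply,
      macUp_succ ha (by omega) (by omega), Nat.add_sub_cancel_left,
      ih (by omega) (macUp_lt n a r hr), show a + 1 + j = a + (j + 1) by ring]

lemma iter_choose (n j a : ℕ) (ha : n ≤ a) : (macUp n)^[j] (a.choose n) = (a + j).choose n := by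
  cases n with
  | zero => simpa using Function.iterate_fixed (show macUp 0 1 = 1 by simp [macUp]) j
  | succ n => simpa [iter_zero] using iter_succ (r := 0) j ha (Nat.choose_pos (by omega))

lemma iter_one (n j : ℕ) : (macUp n)^[j] 1 = (n + j).choose n := by
  simpa using iter_choose n j n le_rfl

lemma isWeightSum_iter (j : ℕ) : IsWeightSum fun n h => (((macUp n)^[j] h : ℕ) : ℤ) := by
  refine ⟨fun n => by simp [iter_zero], fun m n r hr => ?_⟩
  norm_cast
  rw [Nat.choose_symm_add, iter_choose _ _ _ (by omega)]
  rw [show m + 1 + n = m + (n + 1) by ring, ← Nat.choose_symm_of_eq_add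
    (show m + (n + 1) = n + (m + 1) by ring)] at hr
  rcases Nat.eq_or_lt_of_le hr with rfl | hr
  · -- a full segment: the greedy representation carries, and Pascal's rule absorbs the carry
    have e := Nat.choose_succ_succ (m + (n + 1)) n
    have e' := Nat.choose_succ_succ (m + (n + 1) + j) n
    simp only [Nat.succ_eq_add_one] at e e'
    rw [add_comm ((m + (n + 1)).choose (n + 1)), ← e, iter_choose _ _ _ (by omega), iter_choose _ _ _ (by omega),
      show m + (n + 1) + 1 + j = m + (n + 1) + j + 1 by ring, e']
    exact Nat.add_comm _ _
  · exact iter_succ j (by omega) hr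

lemma choose_add_two_succ (l : ℕ) :
    (((l + 1 + 2).choose (l + 1) : ℕ) : ℤ) = ((l + 2).choose l : ℕ) + (l + 2) := by
  rw [Nat.choose_symm_add, Nat.choose_symm_add, show l + 1 + 2 = (l + 2) + 1 by ring,
    Nat.choose_succ_succ (l + 2) 1]
  push_cast [Nat.choose_one_right]
  ring

/-- If `C(α+n, n) + a = b + c` with `a, b, c < C(α+n, n)` (all positive) and
moreover `C(α+n, n)^{<n>} + a^{<n>} = b^{<n>} + c^{<n>}`, then
`(C(α+n, n)^{<n>})^{<n>} + (a^{<n>})^{<n>} = (b^{<n>})^{<n>} + (c^{<n>})^{<n>}`. -/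
theorem macUp_choose_add_eq (a b c α n : ℕ)
    (ha : 0 < a) (hb : 0 < b) (hc : 0 < c) (hα : 0 < α) (hn : 0 < n)
    (heq : (α + n).choose n + a = b + c)
    (ha' : a < (α + n).choose n) (hb' : b < (α + n).choose n)
    (hc' : c < (α + n).choose n)
    (hup : macUp n ((α + n).choose n) + macUp n a = macUp n b + macUp n c) :
    macUp n (macUp n ((α + n).choose n)) + macUp n (macUp n a) =
      macUp n (macUp n b) + macUp n (macUp n c) := by
  have h1 := isWeightSum_iter 1
  have h2 := isWeightSum_iter 2
  -- the weight `(n + 1) (e + 1) - C(e + 2, 2)`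
  have h3 : IsWeightSum fun k h =>
      ((n : ℤ) + 1) * ((macUp k)^[1] h : ℕ) - ((macUp k)^[2] h : ℕ) := by
    refine ⟨fun k => by simp [macUp_zero_right], fun m k r hr => ?_⟩
    have e1 := h1.step m k r hr
    have e2 := h2.step m k r hr
    rw [e1, e2]
    ring
  have i2 := weight_le h2 hα (n := n) (fun l l' hl _ => by
    simp only [iter_one]
    norm_cast
    rw [Nat.choose_symm_add, Nat.choose_symm_add]
    exact Nat.choose_le_choose 2 (by omega)) heq hb'.le hc'.le
  have i3 := weight_le h3 hα (n := n) (fun l l' hl hl' => by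
    simp only [iter_one]
    induction l', hl using Nat.le_induction with
    | base => exact le_rfl
    | succ k hk ih =>
      refine (ih (by omega)).trans ?_
      rw [choose_add_two_succ, Nat.choose_symm_add (a := k) (b := 1),
        Nat.choose_symm_add (a := k + 1) (b := 1)]
      simp only [Nat.choose_one_right]
      push_cast
      have : (k : ℤ) + 1 ≤ n := by exact_mod_cast hl'
      linarith) heq hb'.le hc'.le
  simp only [Function.iterate_succ_apply, Function.iterate_zero_apply] at i2 i3
  have hup' : (macUp n ((α + n).choose n) : ℤ) + macUp n a = macUp n b + macUp n c := by
    exact_mod_cast hup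
  have hmul := congrArg (fun z : ℤ => ((n : ℤ) + 1) * z) hup'
  simp only [mul_add] at hmul
  zify
  linarith
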